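/- (Reshaped Kruskal criterion) Let T ∈ ℙ(Symᵈ(ℂⁿ⁺¹)) and let A ⊂ ℙⁿ be a minimal decomposition of T. Fix a partition d = a + b + c with 0 < a ≤ b ≤ c, and let k_a, k_b, k_c be the Kruskal ranks of the sets ν_a(A), ν_b(A), ν_c(A) respectively. If ℓ(A) ≤ (k_a + k_b + k_c − 2)/2, then T has rank ℓ(A) and is identifiable: every decomposition B of T with ℓ(B) ≤ ℓ(A) equals A. -/

import Mathlib

open MvPolynomial

abbrev ProjPt (n : ℕ) := Projectivization ℂ (Fin (n+1) → ℂ)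

/-- The linear form with coefficient vector `v`: `v 0 • x 0 + ⋯ + v n • x n`. -/
noncomputable def linForm (n : ℕ) (v : Fin (n+1) → ℂ) : MvPolynomial (Fin (n+1)) ℂ :=
  ∑ i, C (v i) * X i

/-- `A ⊂ ℙⁿ` is a decomposition of (the class of) `T ∈ Symᵈ(ℂⁿ⁺¹)` if `T` belongs to the
linear span of the `d`-th powers `L_Pᵈ` of coordinate linear forms of the points `P ∈ A`,
i.e. the class of `T` lies in the projective span `⟨ν_d(A)⟩`. -/
def IsDecomp (n d : ℕ) (T : MvPolynomial (Fin (n+1)) ℂ) (A : Finset (ProjPt n)) : Prop :=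
  T ∈ Submodule.span ℂ ((fun P : ProjPt n => (linForm n P.rep) ^ d) '' (A : Set (ProjPt n)))

/-- A decomposition is minimal if no proper subset is a decomposition. -/
def IsMinimalDecomp (n d : ℕ) (T : MvPolynomial (Fin (n+1)) ℂ)
    (A : Finset (ProjPt n)) : Prop :=
  IsDecomp n d T A ∧ ∀ A' ⊂ A, ¬ IsDecomp n d T A'

/-- The Kruskal rank of the image `ν_e(A)` of a finite set `A ⊂ ℙⁿ` under the degree-`e`
Veronese map: the maximum `k` (necessarily `≤ ℓ(A)`) such that for every subset `S ⊆ A`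
of cardinality `≤ k` the powers `L_Pᵉ`, `P ∈ S`, are linearly independent. -/
noncomputable def veroKruskalRank (n e : ℕ) (A : Finset (ProjPt n)) : ℕ :=
  sSup {k | k ≤ A.card ∧ ∀ S ⊆ A, S.card ≤ k →
    LinearIndependent ℂ (fun P : { x // x ∈ S } => (linForm n (P : ProjPt n).rep) ^ e)}

open scoped TensorProduct
open Module

section Tensor

variable {K X Y ι : Type*} [Field K] [AddCommGroup X] [Module K X] [AddCommGroup Y] [Module K Y]

/-- Two disjoint subspaces are separated by an endomorphism. -/
lemma exists_endomorphism_of_disjoint {U V : Submodule K X} (h : Disjoint U V) :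
    ∃ f : X →ₗ[K] X, (∀ u ∈ U, f u = u) ∧ ∀ v ∈ V, f v = 0 := by
  obtain ⟨W, hVW, hW⟩ := h.symm.exists_isCompl
  exact ⟨U.projection W hW.symm, fun u hu => Submodule.projection_apply_of_mem_left hW.symm hu,
    fun v hv => Submodule.projection_apply_of_mem_right hW.symm (hVW hv)⟩

/-- If the spans of `x` over `N` and over `P` are disjoint, then a combination of the tensors
`x z ⊗ y z` over `N` that is also a combination over `P` vanishes. -/
lemma sum_tmul_eq_zero_of_disjoint {x : ι → X} {y : ι → Y} {c e : ι → K}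
    {P N : Finset ι}
    (hd : Disjoint (Submodule.span K (x '' N)) (Submodule.span K (x '' P)))
    (h : ∑ z ∈ N, c z • (x z ⊗ₜ[K] y z) = ∑ z ∈ P, e z • (x z ⊗ₜ[K] y z)) :
    ∑ z ∈ N, c z • (x z ⊗ₜ[K] y z) = 0 := by
  obtain ⟨f, hN, hP⟩ := exists_endomorphism_of_disjoint hd
  have h' := congrArg (f.rTensor Y) h
  simp only [map_sum, map_smul, LinearMap.rTensor_tmul] at h'
  rw [Finset.sum_congr rfl (fun z hz => by
      rw [hN _ (Submodule.subset_span ⟨z, hz, rfl⟩)] :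
      ∀ z ∈ N, c z • (f (x z) ⊗ₜ[K] y z) = c z • (x z ⊗ₜ[K] y z))] at h'
  rw [h']
  exact Finset.sum_eq_zero fun z hz => by
    rw [hP _ (Submodule.subset_span ⟨z, hz, rfl⟩), TensorProduct.zero_tmul, smul_zero]

/-- A relation among the tensors `x z ⊗ y z`, `z ∈ S`, restricts to `P ⊆ S` if the spans of `x` over
`P` and over `S \ P` are disjoint. -/
lemma sum_tmul_subset_eq_zero_of_disjoint [DecidableEq ι] {x : ι → X} {y : ι → Y} {c : ι → K}
    {P S : Finset ι} (hPS : P ⊆ S)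
    (hd : Disjoint (Submodule.span K (x '' P)) (Submodule.span K (x '' (S \ P : Finset ι))))
    (h : ∑ z ∈ S, c z • (x z ⊗ₜ[K] y z) = 0) :
    ∑ z ∈ P, c z • (x z ⊗ₜ[K] y z) = 0 := by
  refine sum_tmul_eq_zero_of_disjoint (e := -c) hd ?_
  simp only [Pi.neg_apply, neg_smul, Finset.sum_neg_distrib]
  rw [eq_neg_iff_add_eq_zero, add_comm, Finset.sum_sdiff hPS, h]

lemma finrank_span_image_le_card (x : ι → X) (S : Finset ι) :
    finrank K (Submodule.span K (x '' S)) ≤ S.card := by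
  classical
  rw [← Finset.coe_image]
  exact (finrank_span_finset_le_card _).trans Finset.card_image_le

lemma finrank_span_image_mono (x : ι → X) {S S' : Finset ι} (h : S ⊆ S') :
    finrank K (Submodule.span K (x '' S)) ≤ finrank K (Submodule.span K (x '' S')) := by
  have := FiniteDimensional.span_of_finite K (S'.finite_toSet.image x)
  exact Submodule.finrank_mono (Submodule.span_mono (Set.image_mono (by exact_mod_cast h)))

lemma finrank_span_image_of_linearIndepOn {x : ι → X} {S : Finset ι}
    (h : LinearIndepOn K x (S : Set ι)) :
    finrank K (Submodule.span K (x '' S)) = S.card := by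
  have := finrank_span_eq_card h
  rw [Set.image_eq_range]
  simpa using this

/-- A relation with nonzero coefficients among the tensors `x z ⊗ y z` bounds the ranks. -/
lemma finrank_add_finrank_le_card {x : ι → X} {y : ι → Y} {c : ι → K} {N : Finset ι}
    (hc : ∀ z ∈ N, c z ≠ 0) (h : ∑ z ∈ N, c z • (x z ⊗ₜ[K] y z) = 0) :
    finrank K (Submodule.span K (x '' N)) + finrank K (Submodule.span K (y '' N)) ≤ N.card := by
  classical
  obtain ⟨I', hIN', -, hspan, hI⟩ := exists_linearIndepOn_extension
    (linearIndepOn_empty K y) (Set.empty_subset (N : Set ι))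
  lift I' to Finset ι using N.finite_toSet.subset hIN' with I
  have hIN : I ⊆ N := by exact_mod_cast hIN'
  have hy : Submodule.span K (y '' N) = Submodule.span K (y '' I) :=
    le_antisymm (Submodule.span_le.2 hspan) (Submodule.span_mono (Set.image_mono hIN'))
  have hx : Submodule.span K (x '' N) ≤ Submodule.span K (x '' (N \ I : Finset ι)) := by
    rw [Submodule.span_le]
    rintro _ ⟨i, hi, rfl⟩
    have hi : i ∈ N := hi
    by_cases hiI : i ∈ I
    swap
    · exact Submodule.subset_span ⟨i, by simp [hi, hiI], rfl⟩
    have hnot : y i ∉ Submodule.span K (y '' ((I : Set ι) \ {i})) :=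
      (linearIndepOn_iff_notMem_span.1 hI) i hiI
    obtain ⟨g, hgi, hg⟩ := Submodule.exists_le_ker_of_notMem hnot
    have h' := congrArg ((TensorProduct.rid K X).toLinearMap ∘ₗ g.lTensor X) h
    simp only [map_sum, map_smul, LinearMap.comp_apply, LinearMap.lTensor_tmul,
      LinearEquiv.coe_coe, TensorProduct.rid_tmul, map_zero] at h'
    rw [← Finset.sum_sdiff hIN, Finset.sum_eq_single_of_mem i hiI] at h'
    · have hmem : c i • g (y i) • x i ∈ Submodule.span K (x '' (N \ I : Finset ι)) := by
        rw [← neg_eq_of_add_eq_zero_right h']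
        exact Submodule.neg_mem _ (Submodule.sum_mem _ fun z hz => Submodule.smul_mem _ _
          (Submodule.smul_mem _ _ (Submodule.subset_span ⟨z, hz, rfl⟩)))
      rwa [Submodule.smul_mem_iff _ (hc i hi), Submodule.smul_mem_iff _ hgi] at hmem
    · intro z hz hzi
      have : g (y z) = 0 := hg (Submodule.subset_span ⟨z, ⟨hz, hzi⟩, rfl⟩)
      simp [this]
  have := FiniteDimensional.span_of_finite K ((N \ I).finite_toSet.image x)
  have h1 := (Submodule.finrank_mono hx).trans (finrank_span_image_le_card x (N \ I))
  rw [hy, finrank_span_image_of_linearIndepOn hI]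
  have := Finset.card_sdiff_add_card_eq_card hIN
  omega

lemma finrank_sup_eq_add_finrank_map_mkQ (U V : Submodule K X) [FiniteDimensional K U]
    [FiniteDimensional K V] :
    finrank K (U ⊔ V : Submodule K X) = finrank K U + finrank K (V.map U.mkQ) := by
  have h := ((U.mkQ).domRestrict V).finrank_range_add_finrank_ker
  rw [LinearMap.range_domRestrict, LinearMap.ker_domRestrict, Submodule.ker_mkQ] at h
  have h2 := Submodule.finrank_sup_add_finrank_inf_eq U V
  have h3 : finrank K (U.comap V.subtype) = finrank K (U ⊓ V : Submodule K X) := by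
    rw [inf_comm, ← Submodule.map_comap_subtype]
    exact (Submodule.equivMapOfInjective _ V.injective_subtype _).finrank_eq
  have h4 : finrank K (U.submoduleOf V) = finrank K (U.comap V.subtype) := rfl
  omega

lemma finrank_span_image_union [DecidableEq ι] (x : ι → X) (P N : Finset ι) :
    finrank K (Submodule.span K (x '' (P ∪ N : Finset ι))) =
      finrank K (Submodule.span K (x '' P)) +
        finrank K (Submodule.span K ((fun z => (Submodule.span K (x '' P)).mkQ (x z)) '' N)) := by
  have := FiniteDimensional.span_of_finite K (P.finite_toSet.image x)
  have := FiniteDimensional.span_of_finite K (N.finite_toSet.image x)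
  rw [Finset.coe_union, Set.image_union, Submodule.span_union,
    finrank_sup_eq_add_finrank_map_mkQ, Submodule.map_span, Set.image_image]

/-- If the spans of `w` over `P` and over `S \ P` meet nontrivially, then there is a minimal set
`N ⊆ S \ P` supporting a nonzero vector of the span over `P`. -/
lemma exists_minimal_support_of_not_disjoint [DecidableEq ι] {w : ι → X} {P S : Finset ι}
    (h : ¬ Disjoint (Submodule.span K (w '' P)) (Submodule.span K (w '' (S \ P : Finset ι)))) :
    ∃ N ⊆ S \ P, ∃ c : ι → K, N.Nonempty ∧ (∀ z ∈ N, c z ≠ 0) ∧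
      ∑ z ∈ N, c z • w z ∈ Submodule.span K (w '' P) ∧ ∑ z ∈ N, c z • w z ≠ 0 ∧
      finrank K (Submodule.span K (w '' P)) + N.card ≤
        finrank K (Submodule.span K (w '' (P ∪ N : Finset ι))) + 1 := by
  classical
  set U := Submodule.span K (w '' P) with hU
  let good : Finset ι → Prop := fun M =>
    ∃ c : ι → K, ∑ z ∈ M, c z • w z ∈ U ∧ ∑ z ∈ M, c z • w z ≠ 0
  have hex : ((S \ P).powerset.filter good).Nonempty := by
    rw [Submodule.disjoint_def] at h
    push Not at h
    obtain ⟨v, hvP, hvS, hv⟩ := h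
    obtain ⟨c, hc⟩ := (Submodule.mem_span_image_finset_iff_exists_fun' K).1 hvS
    exact ⟨S \ P, by simpa using ⟨c, by rwa [hc], by rwa [hc]⟩⟩
  obtain ⟨N, hN, hmin⟩ := Finset.exists_min_image _ Finset.card hex
  rw [Finset.mem_filter, Finset.mem_powerset] at hN
  obtain ⟨hNS, c, hcU, hc0⟩ := hN
  have hbad : ∀ M ⊂ N, ∀ e : ι → K, ∑ z ∈ M, e z • w z ∈ U → ∑ z ∈ M, e z • w z = 0 := by
    intro M hM e he
    by_contra he0
    exact absurd (hmin M (by simpa using ⟨hM.1.trans hNS, e, he, he0⟩))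
      (not_le.2 (Finset.card_lt_card hM))
  have hsupp : ∀ e : ι → K, ∑ z ∈ N, e z • w z ∈ U → ∑ z ∈ N, e z • w z ≠ 0 →
      ∀ z ∈ N, e z ≠ 0 := by
    intro e heU he0 z hz hez
    have : ∑ z ∈ N.erase z, e z • w z = ∑ z ∈ N, e z • w z :=
      Finset.sum_erase _ (by simp [hez])
    exact he0 (this ▸ hbad _ (Finset.erase_ssubset hz) e (this ▸ heU))
  have hne : N.Nonempty := by
    rw [Finset.nonempty_iff_ne_empty]
    rintro rfl
    simp at hc0
  refine ⟨N, hNS, c, hne, hsupp c hcU hc0, hcU, hc0, ?_⟩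
  obtain ⟨i, hi⟩ := hne
  have hind : LinearIndepOn K (fun z => U.mkQ (w z)) (N.erase i : Finset ι) := by
    rw [linearIndepOn_finset_iff]
    intro g hg j hj
    have hgU : ∑ z ∈ N.erase i, g z • w z ∈ U := by
      rw [← Submodule.ker_mkQ U, LinearMap.mem_ker]
      simpa using hg
    have hg0 := hbad _ (Finset.erase_ssubset hi) g hgU
    by_contra hgj
    let e : ι → K := fun z => c z - (c j / g j) * (if z = i then 0 else g z)
    have he : ∑ z ∈ N, e z • w z = ∑ z ∈ N, c z • w z := by
      have : ∑ z ∈ N, (if z = i then 0 else g z) • w z = 0 := by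
        rw [← hg0, ← Finset.sum_erase N (a := i) (by simp)]
        exact Finset.sum_congr rfl fun z hz => by rw [if_neg (Finset.ne_of_mem_erase hz)]
      simp only [e, sub_smul, mul_smul, Finset.sum_sub_distrib, ← Finset.smul_sum, this,
        smul_zero, sub_zero]
    refine hsupp e (he ▸ hcU) (he ▸ hc0) j (Finset.mem_of_mem_erase hj) ?_
    simp [e, Finset.ne_of_mem_erase hj, div_mul_cancel₀ _ hgj]
  have h1 := finrank_span_image_of_linearIndepOn hind
  have h2 := finrank_span_image_mono (K := K) (fun z => U.mkQ (w z)) (Finset.erase_subset i N)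
  have h3 := finrank_span_image_union (K := K) w P N
  have h4 := Finset.card_erase_add_one hi
  rw [← hU] at h3
  omega

/-- If the tensors `x z ⊗ y z`, `z ∈ S`, do not split into two families with disjoint spans, then
their rank is at least the sum of the ranks of the factors minus one. -/
lemma finrank_add_finrank_le_finrank_tmul_add_one [DecidableEq ι] {x : ι → X} {y : ι → Y}
    {S : Finset ι} (hS : S.Nonempty) (hx : ∀ z ∈ S, x z ≠ 0) (hy : ∀ z ∈ S, y z ≠ 0)
    (hconn : ∀ P ⊂ S, P.Nonempty →
      ¬ Disjoint (Submodule.span K ((fun z => x z ⊗ₜ[K] y z) '' P))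
        (Submodule.span K ((fun z => x z ⊗ₜ[K] y z) '' (S \ P : Finset ι)))) :
    finrank K (Submodule.span K (x '' S)) + finrank K (Submodule.span K (y '' S)) ≤
      finrank K (Submodule.span K ((fun z => x z ⊗ₜ[K] y z) '' S)) + 1 := by
  classical
  let good : Finset ι → Prop := fun P => P.Nonempty ∧
    finrank K (Submodule.span K (x '' P)) + finrank K (Submodule.span K (y '' P)) ≤
      finrank K (Submodule.span K ((fun z => x z ⊗ₜ[K] y z) '' P)) + 1
  have hex : (S.powerset.filter good).Nonempty := by
    obtain ⟨s, hs⟩ := hS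
    refine ⟨{s}, ?_⟩
    have hxy : x s ⊗ₜ[K] y s ≠ 0 := by
      intro h0
      have := finrank_add_finrank_le_card (K := K) (x := x) (y := y) (N := {s}) (c := fun _ => 1)
        (by simp) (by simp [h0])
      rw [Finset.coe_singleton, Set.image_singleton, Set.image_singleton,
        finrank_span_singleton (hx s hs), finrank_span_singleton (hy s hs)] at this
      simp at this
    rw [Finset.mem_filter, Finset.mem_powerset, Finset.singleton_subset_iff]
    refine ⟨hs, Finset.singleton_nonempty s, ?_⟩
    rw [Finset.coe_singleton, Set.image_singleton, Set.image_singleton, Set.image_singleton,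
      finrank_span_singleton (hx s hs), finrank_span_singleton (hy s hs),
      finrank_span_singleton hxy]
  obtain ⟨P, hP, hmax⟩ := Finset.exists_max_image _ Finset.card hex
  rw [Finset.mem_filter, Finset.mem_powerset] at hP
  obtain ⟨hPS, hPne, hP⟩ := hP
  obtain rfl | hss := hPS.eq_or_ssubset
  · exact hP
  exfalso
  obtain ⟨N, hNS, c, hNne, hc, hcP, hc0, hrk⟩ :=
    exists_minimal_support_of_not_disjoint (hconn P hss hPne)
  have hcard : P.card < (P ∪ N).card := by
    rw [Finset.card_union_of_disjoint
      (Finset.disjoint_of_subset_right hNS Finset.disjoint_sdiff)]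
    have := hNne.card_pos
    omega
  refine absurd (hmax (P ∪ N) ?_) (not_le.2 hcard)
  rw [Finset.mem_filter, Finset.mem_powerset]
  refine ⟨Finset.union_subset hPS (hNS.trans Finset.sdiff_subset),
    hPne.mono Finset.subset_union_left, ?_⟩
  obtain ⟨e, he⟩ := (Submodule.mem_span_image_finset_iff_exists_fun' K).1 hcP
  have hxmeet : ¬ Disjoint (Submodule.span K (x '' N)) (Submodule.span K (x '' P)) :=
    fun hd => hc0 (sum_tmul_eq_zero_of_disjoint hd he.symm)
  have hxrk : finrank K (Submodule.span K (x '' (P ∪ N : Finset ι))) + 1 ≤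
      finrank K (Submodule.span K (x '' P)) + finrank K (Submodule.span K (x '' N)) := by
    have := FiniteDimensional.span_of_finite K (P.finite_toSet.image x)
    have := FiniteDimensional.span_of_finite K (N.finite_toSet.image x)
    rw [Finset.coe_union, Set.image_union, Submodule.span_union,
      ← Submodule.finrank_sup_add_finrank_inf_eq]
    rw [disjoint_comm, disjoint_iff] at hxmeet
    have := Submodule.one_le_finrank_iff.2 hxmeet
    omega
  have hyN : ∑ z ∈ N, c z • (x z ⊗ₜ[K] (Submodule.span K (y '' P)).mkQ (y z)) = 0 := by
    have h := congrArg ((Submodule.span K (y '' P)).mkQ.lTensor X) he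
    simp only [map_sum, map_smul, LinearMap.lTensor_tmul] at h
    rw [← h]
    refine Finset.sum_eq_zero fun z hz => ?_
    have : (Submodule.span K (y '' P)).mkQ (y z) = 0 := by
      rw [← LinearMap.mem_ker, Submodule.ker_mkQ]
      exact Submodule.subset_span ⟨z, hz, rfl⟩
    rw [this, TensorProduct.tmul_zero, smul_zero]
  have h1 := finrank_add_finrank_le_card hc hyN
  have h2 := finrank_span_image_union (K := K) y P N
  omega

end Tensor

section Veronese
variable {n : ℕ}

lemma linForm_isHomogeneous (v : Fin (n + 1) → ℂ) : (linForm n v).IsHomogeneous 1 :=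
  IsHomogeneous.sum _ _ _ fun i _ => by
    simpa using (isHomogeneous_C (Fin (n + 1)) (v i)).mul (isHomogeneous_X ℂ i)

lemma eval_linForm (u v : Fin (n + 1) → ℂ) : eval u (linForm n v) = ∑ i, v i * u i := by
  simp [linForm]

lemma linForm_ne_zero {v : Fin (n + 1) → ℂ} (hv : v ≠ 0) : linForm n v ≠ 0 := by
  intro h
  obtain ⟨j, hj⟩ := Function.ne_iff.1 hv
  have := eval_linForm (Pi.single j 1) v
  rw [h] at this
  simp [Pi.single_apply] at this
  exact hj this.symm

/-- The polarization map sends `L ^ (p + q)` to a nonzero multiple of `L ^ p ⊗ L ^ q`. -/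
lemma exists_polarization (n p q : ℕ) :
    ∃ f : MvPolynomial (Fin (n + 1)) ℂ →ₗ[ℂ]
        MvPolynomial (Fin (n + 1)) ℂ ⊗[ℂ] MvPolynomial (Fin (n + 1)) ℂ,
      ∀ v, f (linForm n v ^ (p + q)) = (linForm n v ^ p) ⊗ₜ[ℂ] (linForm n v ^ q) := by
  let Δ : MvPolynomial (Fin (n + 1)) ℂ →ₐ[ℂ]
      MvPolynomial (Fin (n + 1)) ℂ ⊗[ℂ] MvPolynomial (Fin (n + 1)) ℂ :=
    aeval fun i => X i ⊗ₜ[ℂ] 1 + 1 ⊗ₜ[ℂ] X i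
  have hΔ : ∀ v, Δ (linForm n v) = linForm n v ⊗ₜ[ℂ] 1 + 1 ⊗ₜ[ℂ] linForm n v := by
    intro v
    simp only [linForm, map_sum, ← smul_eq_C_mul, map_smul, Δ, aeval_X, smul_add,
      Finset.sum_add_distrib, TensorProduct.sum_tmul, TensorProduct.tmul_sum,
      TensorProduct.smul_tmul', TensorProduct.tmul_smul]
  have hchoose : (((p + q).choose p : ℕ) : ℂ) ≠ 0 :=
    Nat.cast_ne_zero.2 (Nat.choose_pos (Nat.le_add_right p q)).ne'
  refine ⟨(((p + q).choose p : ℕ) : ℂ)⁻¹ •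
    (TensorProduct.map (homogeneousComponent p) (homogeneousComponent q) ∘ₗ Δ.toLinearMap),
    fun v => ?_⟩
  have hcomp : ∀ i j, homogeneousComponent i (linForm n v ^ j) =
      if i = j then linForm n v ^ j else 0 := fun i j =>
    homogeneousComponent_of_mem (by simpa using (linForm_isHomogeneous v).pow j)
  have hpow : Δ (linForm n v ^ (p + q)) = ∑ m ∈ Finset.range (p + q + 1),
      (((p + q).choose m : ℕ) : ℂ) • ((linForm n v ^ m) ⊗ₜ[ℂ] (linForm n v ^ (p + q - m))) := by
    rw [map_pow, hΔ, add_pow]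
    refine Finset.sum_congr rfl fun m _ => ?_
    rw [Algebra.TensorProduct.tmul_pow, Algebra.TensorProduct.tmul_pow,
      Algebra.TensorProduct.tmul_mul_tmul, one_pow, one_pow, one_mul, mul_one,
      ← nsmul_eq_mul', Nat.cast_smul_eq_nsmul]
  rw [LinearMap.smul_apply, LinearMap.comp_apply, AlgHom.toLinearMap_apply, hpow, map_sum,
    Finset.sum_eq_single_of_mem p (by simp)]
  · simp [hcomp, smul_smul, inv_mul_cancel₀ hchoose]
  · intro m _ hm
    simp [hcomp, hm.symm]

lemma sum_smul_linForm_pow_tmul_eq_zero_iff {ι : Type*} (v : ι → Fin (n + 1) → ℂ) (c : ι → ℂ)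
    (S : Finset ι) (p q r : ℕ) :
    ∑ z ∈ S, c z • (((linForm n (v z) ^ p) ⊗ₜ[ℂ] (linForm n (v z) ^ q)) ⊗ₜ[ℂ]
        (linForm n (v z) ^ r)) = 0 ↔
      ∑ z ∈ S, c z • linForm n (v z) ^ (p + q + r) = 0 := by
  constructor <;> intro h
  · let μ := LinearMap.mul' ℂ (MvPolynomial (Fin (n + 1)) ℂ)
    have h' := congrArg (μ ∘ₗ μ.rTensor _) h
    simpa only [map_sum, map_smul, μ, LinearMap.comp_apply, LinearMap.rTensor_tmul,
      LinearMap.mul'_apply, map_zero, ← pow_add] using h'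
  · obtain ⟨f, hf⟩ := exists_polarization n (p + q) r
    obtain ⟨g, hg⟩ := exists_polarization n p q
    have h' := congrArg (g.rTensor _ ∘ₗ f) h
    simpa only [map_sum, map_smul, LinearMap.comp_apply, hf, LinearMap.rTensor_tmul, hg,
      map_zero] using h'

/-- Distinct points of projective space have non-proportional powers. -/
lemma eq_of_smul_linForm_pow_eq {P Q : ProjPt n} {e : ℕ} (he : e ≠ 0) {s t : ℂ} (ht : t ≠ 0)
    (h : s • linForm n P.rep ^ e = t • linForm n Q.rep ^ e) : P = Q := by
  have hker : ∀ u : Fin (n + 1) → ℂ, ∑ i, P.rep i * u i = 0 → ∑ i, Q.rep i * u i = 0 := by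
    intro u hu
    have h' := congrArg (eval u) h
    simpa [smul_eval, eval_linForm, hu, he, ht] using h'.symm
  obtain ⟨j, hj⟩ := Function.ne_iff.1 P.rep_nonzero
  rw [← P.mk_rep, ← Q.mk_rep, eq_comm, Projectivization.mk_eq_mk_iff']
  refine ⟨Q.rep j / P.rep j, funext fun i => ?_⟩
  have h1 := hker (P.rep j • Pi.single i 1 - P.rep i • Pi.single j 1) (by
    simp [mul_sub, Finset.sum_sub_distrib, Pi.single_apply]; ring)
  simp [mul_sub, Finset.sum_sub_distrib, Pi.single_apply] at h1
  have hj : P.rep j ≠ 0 := hj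
  simp only [Pi.smul_apply, smul_eq_mul]
  field_simp
  linear_combination -h1

lemma veroKruskalRank_mem (n e : ℕ) (A : Finset (ProjPt n)) :
    veroKruskalRank n e A ≤ A.card ∧ ∀ S ⊆ A, S.card ≤ veroKruskalRank n e A →
      LinearIndependent ℂ (fun P : { x // x ∈ S } => (linForm n (P : ProjPt n).rep) ^ e) := by
  refine Nat.sSup_mem (s := {k | k ≤ A.card ∧ ∀ S ⊆ A, S.card ≤ k →
    LinearIndependent ℂ (fun P : { x // x ∈ S } => (linForm n (P : ProjPt n).rep) ^ e)})
    ⟨0, Nat.zero_le _, fun S _ hS => ?_⟩ ⟨A.card, fun k hk => hk.1⟩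
  obtain rfl : S = ∅ := Finset.card_eq_zero.1 (Nat.le_zero.1 hS)
  exact linearIndependent_empty_type

lemma min_veroKruskalRank_le_finrank {e : ℕ} {A A' Z : Finset (ProjPt n)} (hA : A' ⊆ A)
    (hZ : A' ⊆ Z) :
    min (veroKruskalRank n e A) A'.card ≤
      finrank ℂ (Submodule.span ℂ ((fun P : ProjPt n => linForm n P.rep ^ e) '' Z)) := by
  obtain ⟨S, hS, hcard⟩ := Finset.exists_subset_card_eq
    (min_le_right (veroKruskalRank n e A) A'.card)
  rw [← hcard]
  have h := (veroKruskalRank_mem n e A).2 S (hS.trans hA) (hcard ▸ min_le_left _ _)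
  have h' : LinearIndepOn ℂ (fun P : ProjPt n => linForm n P.rep ^ e) (S : Set (ProjPt n)) := h
  rw [← finrank_span_image_of_linearIndepOn h']
  exact finrank_span_image_mono _ (hS.trans hZ)

/-- A relation among `d`-th powers which does not restrict to any proper nonempty subset bounds the
Hilbert function of its support. -/
lemma finrank_add_finrank_add_finrank_le [DecidableEq (ProjPt n)] {a b c : ℕ}
    {Z : Finset (ProjPt n)} {g : ProjPt n → ℂ} (hZ : Z.Nonempty) (hg : ∀ P ∈ Z, g P ≠ 0)
    (h : ∑ P ∈ Z, g P • linForm n P.rep ^ (a + b + c) = 0)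
    (hirr : ∀ S ⊂ Z, S.Nonempty → ∑ P ∈ S, g P • linForm n P.rep ^ (a + b + c) ≠ 0) :
    finrank ℂ (Submodule.span ℂ ((fun P : ProjPt n => linForm n P.rep ^ a) '' Z)) +
      finrank ℂ (Submodule.span ℂ ((fun P : ProjPt n => linForm n P.rep ^ b) '' Z)) +
      finrank ℂ (Submodule.span ℂ ((fun P : ProjPt n => linForm n P.rep ^ c) '' Z)) ≤
        Z.card + 1 := by
  have hrel := (sum_smul_linForm_pow_tmul_eq_zero_iff Projectivization.rep g Z a b c).2 h
  have h1 := finrank_add_finrank_le_card hg hrel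
  have hne : ∀ (e : ℕ), ∀ P ∈ Z, linForm n P.rep ^ e ≠ 0 := fun e P _ =>
    pow_ne_zero e (linForm_ne_zero P.rep_nonzero)
  have h2 := finrank_add_finrank_le_finrank_tmul_add_one (K := ℂ) hZ (hne a) (hne b) (by
    intro S hS hSne hdisj
    refine hirr S hS hSne ?_
    rw [← sum_smul_linForm_pow_tmul_eq_zero_iff Projectivization.rep g S a b c]
    exact sum_tmul_subset_eq_zero_of_disjoint hS.1 hdisj hrel)
  omega

/-- There is no relation among `d`-th powers with nonzero coefficients on a set of points at least
half of which lie in `A`, when `A` satisfies the Kruskal bound. -/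
lemma no_relation_of_kruskal_bound [DecidableEq (ProjPt n)] {a b c : ℕ} (ha : 0 < a)
    {A : Finset (ProjPt n)}
    (hcard : 2 * A.card + 2 ≤
      veroKruskalRank n a A + veroKruskalRank n b A + veroKruskalRank n c A)
    (g : ProjPt n → ℂ) (Z : Finset (ProjPt n)) (hZ : Z.Nonempty)
    (hZA : (Z \ A).card ≤ (Z ∩ A).card) (hg : ∀ P ∈ Z, g P ≠ 0) :
    ∑ P ∈ Z, g P • linForm n P.rep ^ (a + b + c) ≠ 0 := by
  induction Z using Finset.strongInduction with
  | H Z ih =>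
  intro h
  have hirr : ∀ S ⊂ Z, S.Nonempty → ∑ P ∈ S, g P • linForm n P.rep ^ (a + b + c) ≠ 0 := by
    intro S hS hSne hsum
    have hsum' : ∑ P ∈ Z \ S, g P • linForm n P.rep ^ (a + b + c) = 0 := by
      rw [← Finset.sum_sdiff hS.1, hsum, add_zero] at h
      exact h
    by_cases hSA : (S \ A).card ≤ (S ∩ A).card
    · exact ih S hS hSne hSA (fun P hP => hg P (hS.1 hP)) hsum
    · refine ih (Z \ S) (Finset.sdiff_ssubset hS.1 hSne) (Finset.sdiff_nonempty.2 hS.2) ?_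
        (fun P hP => hg P (Finset.mem_sdiff.1 hP).1) hsum'
      have h1 := Finset.card_sdiff_add_card_inter Z A
      have h2 := Finset.card_sdiff_add_card_inter S A
      have h3 := Finset.card_sdiff_add_card_inter (Z \ S) A
      have h4 := Finset.card_sdiff_add_card_eq_card hS.1
      have h5 : ((Z \ S) ∩ A).card + (S ∩ A).card = (Z ∩ A).card := by
        rw [← Finset.card_union_of_disjoint, ← Finset.union_inter_distrib_right,
          Finset.sdiff_union_of_subset hS.1]
        exact Finset.disjoint_of_subset_left Finset.inter_subset_left
          (Finset.disjoint_of_subset_right Finset.inter_subset_left Finset.sdiff_disjoint)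
      omega
  have hbound := finrank_add_finrank_add_finrank_le hZ hg h hirr
  have hmin := fun e => min_veroKruskalRank_le_finrank (e := e)
    (Finset.inter_subset_right (s₁ := Z) (s₂ := A)) Finset.inter_subset_left
  have ha1 := hmin a
  have hb1 := hmin b
  have hc1 := hmin c
  have ha2 := (veroKruskalRank_mem n a A).1
  have hb2 := (veroKruskalRank_mem n b A).1
  have hc2 := (veroKruskalRank_mem n c A).1
  have hsplit := Finset.card_sdiff_add_card_inter Z A
  have hpos := hZ.card_pos
  have hle := Finset.card_le_card (Finset.inter_subset_right (s₁ := Z) (s₂ := A))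
  obtain hZ2 | hZ2 : Z.card = 2 ∨ Z.card ≠ 2 := eq_or_ne _ _
  · obtain ⟨P, Q, hPQ, rfl⟩ := Finset.card_eq_two.1 hZ2
    rw [Finset.sum_pair hPQ, add_eq_zero_iff_eq_neg, ← neg_smul] at h
    exact hPQ (eq_of_smul_linForm_pow_eq (by omega) (neg_ne_zero.2 (hg Q (by simp))) h)
  · omega

end Veronese

/-- Reshaped Kruskal criterion: let `A` be a minimal decomposition of
`T ∈ ℙ(Symᵈ(ℂⁿ⁺¹))`, let `d = a + b + c` with `0 < a ≤ b ≤ c`, and let `k_a, k_b, k_c`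
be the Kruskal ranks of `ν_a(A), ν_b(A), ν_c(A)`.  If `ℓ(A) ≤ (k_a + k_b + k_c - 2)/2`,
then `T` has rank `ℓ(A)` and is identifiable: every decomposition `B` of `T` with
`ℓ(B) ≤ ℓ(A)` equals `A`. -/
theorem reshaped_kruskal_criterion (n d a b c : ℕ) (hd : d = a + b + c)
    (ha : 0 < a) (hab : a ≤ b) (hbc : b ≤ c)
    (T : MvPolynomial (Fin (n+1)) ℂ) (hT : T ≠ 0)
    (A : Finset (ProjPt n)) (hA : IsMinimalDecomp n d T A)
    (hcard : 2 * A.card + 2 ≤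
      veroKruskalRank n a A + veroKruskalRank n b A + veroKruskalRank n c A) :
    ∀ B : Finset (ProjPt n), IsDecomp n d T B → B.card ≤ A.card → B = A := by
  classical
  subst hd
  intro B hB hBA
  obtain ⟨l, hl⟩ := (Submodule.mem_span_image_finset_iff_exists_fun' ℂ).1 hA.1
  obtain ⟨m, hm⟩ := (Submodule.mem_span_image_finset_iff_exists_fun' ℂ).1 hB
  have hl0 : ∀ P ∈ A, l P ≠ 0 := by
    intro P hP hlP
    refine hA.2 (A.erase P) (Finset.erase_ssubset hP)
      ((Submodule.mem_span_image_finset_iff_exists_fun' ℂ).2 ⟨l, ?_⟩)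
    rw [← hl]
    exact Finset.sum_erase _ (by simp [hlP])
  by_contra hne
  have hAB : ¬ A ⊆ B := fun hsub => hne (Finset.eq_of_subset_of_card_le hsub hBA).symm
  let g : ProjPt n → ℂ := fun P => (if P ∈ A then l P else 0) - (if P ∈ B then m P else 0)
  let Z := (A ∪ B).filter fun P => g P ≠ 0
  have hABZ : A \ B ⊆ Z ∩ A := by
    intro P hP
    rw [Finset.mem_sdiff] at hP
    simp [Z, g, hP.1, hP.2, hl0 P hP.1]
  have hZBA : Z \ A ⊆ B \ A := by
    intro P hP
    simp only [Z, Finset.mem_sdiff, Finset.mem_filter, Finset.mem_union] at hP ⊢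
    tauto
  refine no_relation_of_kruskal_bound ha hcard g Z
    (((Finset.sdiff_nonempty.2 hAB).mono hABZ).mono Finset.inter_subset_left) ?_
    (fun P hP => (Finset.mem_filter.1 hP).2) ?_
  · have h1 := Finset.card_le_card hABZ
    have h2 := Finset.card_le_card hZBA
    have h3 := Finset.card_sdiff_add_card_inter A B
    have h4 := Finset.card_sdiff_add_card_inter B A
    rw [Finset.inter_comm] at h4
    omega
  · have hsum : ∑ P ∈ A ∪ B, g P • linForm n P.rep ^ (a + b + c) = 0 := by
      simp only [g, sub_smul, ite_smul, zero_smul, Finset.sum_sub_distrib,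
        ← Finset.sum_filter, Finset.filter_mem_eq_inter, Finset.union_inter_cancel_left,
        Finset.union_inter_cancel_right]
      rw [hl, hm, sub_self]
    rw [← hsum]
    refine Finset.sum_filter_of_ne fun P _ hP hgP => hP ?_
    rw [hgP, zero_smul]
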